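/- Let X ~ N(0, σ_X²) and Y ~ N(0, σ_Y²) be independent real Gaussian random variables with σ_X, σ_Y > 0, and let μ > 0. Then E[ tanh((X+Y)/μ) · X ] ≥ √(2/π) · σ_X² / √(σ_X² + σ_Y²) − 2σ_X² μ² / (√(2π)(σ_X² + σ_Y²)^{3/2}) − 3σ_X² μ⁴ / (2√(2π)(σ_X² + σ_Y²)^{5/2}). -/

import Mathlib

open MeasureTheory ProbabilityTheory Real Matrix
open scoped RealInnerProductSpace ENNReal NNReal

noncomputable section

/-- The Bernoulli–Gaussian law `BG(θ)`: with probability `θ` a standard Gaussian,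
with probability `1-θ` a point mass at `0`. -/
def bg (θ : ℝ) : Measure ℝ :=
  θ.toNNReal • gaussianReal 0 1 + (1 - θ).toNNReal • Measure.dirac 0

instance bg.instIsFiniteMeasure (θ : ℝ) : IsFiniteMeasure (bg θ) := by
  unfold bg; infer_instance

/-- Law of an `n × p` matrix with i.i.d. `BG(θ)` entries. -/
def bgMatrix (θ : ℝ) (n p : ℕ) : Measure (Fin n → Fin p → ℝ) :=
  Measure.pi fun _ => Measure.pi fun _ => bg θ

/-- Law of a vector in `ℝ^n` with i.i.d. `BG(θ)` entries. -/
def bgVec (θ : ℝ) (n : ℕ) : Measure (Fin n → ℝ) :=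
  Measure.pi fun _ => bg θ

/-- The smooth sparsity surrogate `h_μ(z) = μ log cosh (z/μ)`. -/
def hmu (μ z : ℝ) : ℝ := μ * Real.log (Real.cosh (z / μ))

/-- Reparametrization `q(w) = (w, √(1-‖w‖²))` with `w` in the unit ball of `ℝ^{n-1}`. -/
def qmap (n : ℕ) (w : EuclideanSpace ℝ (Fin (n - 1))) : Fin n → ℝ :=
  fun i => if h : (i : ℕ) < n - 1 then w ⟨i, h⟩ else Real.sqrt (1 - ‖w‖ ^ 2)

/-- `f(q; Y) = (1/p) ∑ₖ h_μ(qᵀ yₖ)`. -/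
def ffun (n p : ℕ) (μ : ℝ) (Y : Matrix (Fin n) (Fin p) ℝ)
    (q : EuclideanSpace ℝ (Fin n)) : ℝ :=
  (p : ℝ)⁻¹ * ∑ k : Fin p, hmu μ (∑ i : Fin n, q i * Y i k)

/-- `g(w; Y) = f(q(w); Y)`. -/
def gfun (n p : ℕ) (μ : ℝ) (Y : Matrix (Fin n) (Fin p) ℝ)
    (w : EuclideanSpace ℝ (Fin (n - 1))) : ℝ :=
  (p : ℝ)⁻¹ * ∑ k : Fin p, hmu μ (∑ i : Fin n, qmap n w i * Y i k)

/-- Gradient `∇g(w; Y)` in `w`. -/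
def gradg (n p : ℕ) (μ : ℝ) (Y : Matrix (Fin n) (Fin p) ℝ)
    (w : EuclideanSpace ℝ (Fin (n - 1))) : EuclideanSpace ℝ (Fin (n - 1)) :=
  gradient (gfun n p μ Y) w

/-- Hessian `∇²g(w; Y)` in `w`, as a continuous linear map. -/
def hessg (n p : ℕ) (μ : ℝ) (Y : Matrix (Fin n) (Fin p) ℝ)
    (w : EuclideanSpace ℝ (Fin (n - 1))) :
    EuclideanSpace ℝ (Fin (n - 1)) →L[ℝ] EuclideanSpace ℝ (Fin (n - 1)) :=
  fderiv ℝ (gradg n p μ Y) w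

/-- The set `Γ = {w : ‖w‖ < √((4n-1)/(4n))}`. -/
def GammaSet (n : ℕ) : Set (EuclideanSpace ℝ (Fin (n - 1))) :=
  {w | ‖w‖ < Real.sqrt ((4 * (n : ℝ) - 1) / (4 * n))}

/-- Spectral (`ℓ²→ℓ²` operator) norm of а matrix. -/
def specNorm {m k : ℕ} (M : Matrix (Fin m) (Fin k) ℝ) : ℝ :=
  ‖LinearMap.toContinuousLinearMap (Matrix.toEuclideanLin M)‖

/-- Largest magnitude of an entry of a matrix. -/
def Minf {m k : ℕ} (M : Matrix (Fin m) (Fin k) ℝ) : ℝ := ⨆ i, ⨆ j, |M i j|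

/-- Condition number: ratio of largest to smallest singular value. -/
def kappa {n : ℕ} (s : Fin n → ℝ) : ℝ := (⨆ i, s i) / (⨅ i, s i)

/-- Signed standard basis vectors `{± e_i}` of `ℝ^n`. -/
def SignedBasis (n : ℕ) : Set (EuclideanSpace ℝ (Fin n)) :=
  {b | ∃ i : Fin n, b = EuclideanSpace.single i (1 : ℝ) ∨ b = -EuclideanSpace.single i (1 : ℝ)}

/-- Set of local minimizers of `f(·; Y)` over the unit sphere `S^{n-1}`. -/
def LocalMins (n p : ℕ) (μ : ℝ) (Y : Matrix (Fin n) (Fin p) ℝ) :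
    Set (EuclideanSpace ℝ (Fin n)) :=
  {q | q ∈ Metric.sphere (0 : EuclideanSpace ℝ (Fin n)) 1 ∧
       IsLocalMinOn (ffun n p μ Y) (Metric.sphere (0 : EuclideanSpace ℝ (Fin n)) 1) q}

/-- Expected objective `E_x[h_μ(q(w)ᵀ x)]` for `x` with i.i.d. `BG(θ)` entries. -/
def Gexp (n : ℕ) (θ μ : ℝ) (w : EuclideanSpace ℝ (Fin (n - 1))) : ℝ :=
  ∫ x, hmu μ (∑ i : Fin n, qmap n w i * x i) ∂(bgVec θ n)

/-!
Put `Z = X + Y` and `s² = σ_X² + σ_Y²`. Since `s² X - σ_X² Z` is uncorrelated with `Z` and jointly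
Gaussian with it, it is independent of `Z`, so `E[φ(Z) X] = (σ_X² / s²) E[φ(Z) Z]` for every
square-integrable `φ(Z)`. This reduces the problem to the single variable `Z`. There
`tanh(z/μ) z` falls short of `|z|` by at most `2 |z| exp(-2|z|/μ)`; the mean of `|Z|` is `√(2/π) s`,
and bounding the Gaussian density by its maximum `1 / (√(2π) s)` shows that the mean shortfall
is at most `μ² / (√(2π) s)`. The resulting bound is sharper than the claimed one: it has half the
`μ²` correction and no `μ⁴` correction.
-/

section Regression

variable {Ω : Type*} {mΩ : MeasurableSpace Ω} {P : Measure Ω} {X Y Z : Ω → ℝ} {φ : ℝ → ℝ}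

lemma variance_mul_covariance_comp_of_hasGaussianLaw
    (hXZ : HasGaussianLaw (fun ω ↦ (X ω, Z ω)) P) (hφ : MemLp φ 2 (P.map Z)) :
    Var[Z; P] * cov[φ ∘ Z, X; P] = cov[X, Z; P] * cov[φ ∘ Z, Z; P] := by
  have := hXZ.isProbabilityMeasure
  have hX : MemLp X 2 P := hXZ.fst.memLp_two
  have hZ : MemLp Z 2 P := hXZ.snd.memLp_two
  have hφZ : MemLp (φ ∘ Z) 2 P := hφ.comp_of_map hZ.aemeasurable
  set W : Ω → ℝ := Var[Z; P] • X - cov[X, Z; P] • Z with hW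
  have hZW : HasGaussianLaw (fun ω ↦ (Z ω, W ω)) P :=
    hXZ.map_fun ((ContinuousLinearMap.snd ℝ ℝ ℝ).prod
      (Var[Z; P] • ContinuousLinearMap.fst ℝ ℝ ℝ - cov[X, Z; P] • ContinuousLinearMap.snd ℝ ℝ ℝ))
  have hcov_left (V : Ω → ℝ) (hV : MemLp V 2 P) :
      cov[V, W; P] = Var[Z; P] * cov[V, X; P] - cov[X, Z; P] * cov[V, Z; P] := by
    rw [hW, covariance_sub_right hV (hX.const_smul _) (hZ.const_smul _),
      covariance_smul_right, covariance_smul_right]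
  have hZW_cov : cov[Z, W; P] = 0 := by
    rw [hcov_left Z hZ, covariance_self hZ.aemeasurable, covariance_comm Z X]
    ring
  have hφZW : IndepFun (φ ∘ Z) W P :=
    (hZW.indepFun_of_covariance_eq_zero hZW_cov).comp₀ hZ.aemeasurable hZW.snd.aemeasurable
      hφ.aestronglyMeasurable.aemeasurable aemeasurable_id
  rw [← sub_eq_zero, ← hcov_left _ hφZ]
  exact hφZW.covariance_eq_zero hφZ hZW.snd.memLp_two

lemma variance_add_mul_covariance_comp_add_of_indepFun (hX : HasGaussianLaw X P)
    (hY : HasGaussianLaw Y P) (hXY : IndepFun X Y P) (hφ : MemLp φ 2 (P.map (X + Y))) :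
    Var[X + Y; P] * cov[φ ∘ (X + Y), X; P] = Var[X; P] * cov[φ ∘ (X + Y), X + Y; P] := by
  have hXZ : HasGaussianLaw (fun ω ↦ (X ω, (X + Y) ω)) P :=
    (hXY.hasGaussianLaw hX hY).map_fun ((ContinuousLinearMap.fst ℝ ℝ ℝ).prod
      (ContinuousLinearMap.fst ℝ ℝ ℝ + ContinuousLinearMap.snd ℝ ℝ ℝ))
  have := hX.isProbabilityMeasure
  have hcov : cov[X, X + Y; P] = Var[X; P] := by
    rw [covariance_add_right hX.memLp_two hX.memLp_two hY.memLp_two,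
      covariance_self hX.aemeasurable, hXY.covariance_eq_zero hX.memLp_two hY.memLp_two, add_zero]
  rw [variance_mul_covariance_comp_of_hasGaussianLaw hXZ hφ, hcov]

lemma covariance_eq_integral_mul_of_integral_eq_zero [IsProbabilityMeasure P]
    (hX : MemLp X 2 P) (hY : MemLp Y 2 P) (hY_mean : ∫ ω, Y ω ∂P = 0) :
    cov[X, Y; P] = ∫ ω, X ω * Y ω ∂P := by
  rw [covariance_eq_sub hX hY, hY_mean, mul_zero, sub_zero]
  rfl

lemma integral_comp_add_mul_of_hasLaw_gaussianReal {a b : ℝ≥0}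
    (hX : HasLaw X (gaussianReal 0 a) P) (hY : HasLaw Y (gaussianReal 0 b) P)
    (hXY : IndepFun X Y P) (hφ : MemLp φ 2 (gaussianReal 0 (a + b))) :
    (a + b) * ∫ ω, φ (X ω + Y ω) * X ω ∂P = a * ∫ z, φ z * z ∂(gaussianReal 0 (a + b)) := by
  have := hX.isProbabilityMeasure
  have hZ : HasLaw (X + Y) (gaussianReal 0 (a + b)) P := by
    simpa only [gaussianReal_conv_gaussianReal, add_zero] using hXY.hasLaw_add hX hY
  have hφZ : MemLp φ 2 (P.map (X + Y)) := hZ.map_eq ▸ hφ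
  have hφ_comp : MemLp (φ ∘ (X + Y)) 2 P := hφZ.comp_of_map hZ.aemeasurable
  have hX_mean : ∫ ω, X ω ∂P = 0 := hX.integral_eq.trans integral_id_gaussianReal
  have hZ_mean : ∫ ω, (X + Y) ω ∂P = 0 := hZ.integral_eq.trans integral_id_gaussianReal
  have hcov := variance_add_mul_covariance_comp_add_of_indepFun
    hX.hasGaussianLaw hY.hasGaussianLaw hXY hφZ
  rw [hZ.variance_eq, hX.variance_eq, variance_id_gaussianReal, variance_id_gaussianReal,
    covariance_eq_integral_mul_of_integral_eq_zero hφ_comp hX.hasGaussianLaw.memLp_two hX_mean,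
    covariance_eq_integral_mul_of_integral_eq_zero hφ_comp hZ.hasGaussianLaw.memLp_two hZ_mean,
    NNReal.coe_add] at hcov
  have hZ_int : ∫ ω, φ ((X + Y) ω) * (X + Y) ω ∂P = ∫ z, φ z * z ∂(gaussianReal 0 (a + b)) :=
    hZ.integral_comp (f := fun z ↦ φ z * z)
      (hφ.aestronglyMeasurable.mul aestronglyMeasurable_id)
  exact hcov.trans (congrArg _ hZ_int)

end Regression

lemma continuous_tanh : Continuous tanh := by
  simp_rw [funext Real.tanh_eq_sinh_div_cosh]
  exact continuous_sinh.div continuous_cosh fun x ↦ (cosh_pos x).ne'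

lemma one_sub_two_mul_exp_le_tanh (x : ℝ) : 1 - 2 * rexp (-2 * x) ≤ tanh x := by
  have hexp : rexp (-2 * x) = rexp (-x) / rexp x := by rw [← Real.exp_sub]; ring_nf
  have hgap : rexp x - rexp (-x) - (1 - 2 * (rexp (-x) / rexp x)) * (rexp x + rexp (-x))
      = 2 * rexp (-x) ^ 2 / rexp x := by
    field_simp
    ring
  rw [Real.tanh_eq, hexp, le_div_iff₀ (by positivity), ← sub_nonneg, hgap]
  positivity

lemma tanh_abs_mul_abs (x : ℝ) : tanh |x| * |x| = tanh x * x := by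
  rcases abs_choice x with h | h <;> rw [h]
  rw [Real.tanh_neg, neg_mul_neg]

lemma abs_sub_two_mul_abs_mul_exp_le_tanh_mul (x : ℝ) :
    |x| - 2 * (|x| * rexp (-(2 * |x|))) ≤ tanh x * x := by
  rw [← tanh_abs_mul_abs, ← neg_mul]
  linarith [mul_le_mul_of_nonneg_right (one_sub_two_mul_exp_le_tanh |x|) (abs_nonneg x)]

lemma abs_sub_two_mul_abs_mul_exp_le_tanh_div_mul {μ : ℝ} (hμ : 0 < μ) (z : ℝ) :
    |z| - 2 * (|z| * rexp (-(2 / μ * |z|))) ≤ tanh (z / μ) * z := by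
  obtain ⟨x, rfl⟩ : ∃ x, z = μ * x := ⟨z / μ, (mul_div_cancel₀ z hμ.ne').symm⟩
  have hexp : 2 / μ * (μ * |x|) = 2 * |x| := by field_simp
  rw [abs_mul, abs_of_pos hμ, mul_div_cancel_left₀ x hμ.ne', hexp]
  linarith [mul_le_mul_of_nonneg_left (abs_sub_two_mul_abs_mul_exp_le_tanh_mul x) hμ.le]

lemma integral_abs_mul_exp_neg_mul_abs {r : ℝ} (hr : 0 < r) :
    ∫ x : ℝ, |x| * rexp (-(r * |x|)) = 2 / r ^ 2 := by
  have hhalf : ∫ x in Set.Ioi (0 : ℝ), x * rexp (-(r * x)) = 1 / r ^ 2 := by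
    have h := Real.integral_rpow_mul_exp_neg_mul_Ioi two_pos hr
    norm_num at h
    simpa using h
  rw [integral_comp_abs (f := fun x ↦ x * rexp (-(r * x))), hhalf, mul_one_div]

lemma integrable_abs_mul_exp_neg_mul_abs {r : ℝ} (hr : 0 < r) :
    Integrable fun x : ℝ ↦ |x| * rexp (-(r * |x|)) := by
  refine Integrable.of_integral_ne_zero ?_
  rw [integral_abs_mul_exp_neg_mul_abs hr]
  positivity

lemma gaussianPDFReal_le_inv_sqrt (m : ℝ) (v : ℝ≥0) (x : ℝ) :
    gaussianPDFReal m v x ≤ (√(2 * π * v))⁻¹ := by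
  refine mul_le_of_le_one_right (by positivity) (Real.exp_le_one_iff.2 ?_)
  exact div_nonpos_of_nonpos_of_nonneg (neg_nonpos.2 (sq_nonneg _)) (by positivity)

lemma integral_gaussianReal_le_inv_sqrt_mul_integral (m : ℝ) {v : ℝ≥0} (hv : v ≠ 0) {f : ℝ → ℝ}
    (hf_nonneg : 0 ≤ f) (hf : Integrable f) :
    ∫ x, f x ∂(gaussianReal m v) ≤ (√(2 * π * v))⁻¹ * ∫ x, f x := by
  rw [integral_gaussianReal_eq_integral_smul hv, ← integral_const_mul]
  exact integral_mono_of_nonneg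
    (ae_of_all _ fun x ↦ mul_nonneg (gaussianPDFReal_nonneg m v x) (hf_nonneg x))
    (hf.const_mul _)
    (ae_of_all _ fun x ↦
      mul_le_mul_of_nonneg_right (gaussianPDFReal_le_inv_sqrt m v x) (hf_nonneg x))

lemma integral_abs_gaussianReal (v : ℝ≥0) :
    ∫ x, |x| ∂(gaussianReal 0 v) = √(2 * v / π) := by
  rcases eq_or_ne v 0 with rfl | hv
  · simp
  have hpdf (x : ℝ) : gaussianPDFReal 0 v x • |x|
      = (√(2 * π * v))⁻¹ * (|x| * rexp (-(1 / (2 * v) * |x| ^ 2))) := by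
    have hexp : -x ^ 2 / (2 * v) = -(1 / (2 * v) * x ^ 2) := by ring
    rw [gaussianPDFReal, smul_eq_mul, sq_abs, sub_zero, hexp]
    ring
  have hhalf : ∫ x in Set.Ioi (0 : ℝ), x * rexp (-(1 / (2 * v) * x ^ 2)) = v := by
    have h := integral_rpow_mul_exp_neg_mul_rpow (p := 2) (q := 1) (b := 1 / (2 * (v : ℝ)))
      (by norm_num) (by norm_num) (by positivity)
    norm_num [Real.rpow_neg_one] at h ⊢
    rw [h]
    ring
  have hsq : 2 * (v : ℝ) / π = (2 * v) ^ 2 / (2 * π * v) := by field_simp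
  rw [integral_gaussianReal_eq_integral_smul hv]
  simp_rw [hpdf]
  rw [integral_const_mul, integral_comp_abs (f := fun x ↦ x * rexp (-(1 / (2 * v) * x ^ 2))),
    hhalf, hsq, Real.sqrt_div (sq_nonneg _), Real.sqrt_sq (by positivity), div_eq_inv_mul]

lemma le_integral_tanh_div_mul_gaussianReal {v : ℝ≥0} (hv : v ≠ 0) {μ : ℝ} (hμ : 0 < μ) :
    √(2 * v / π) - μ ^ 2 / √(2 * π * v) ≤ ∫ z, tanh (z / μ) * z ∂(gaussianReal 0 v) := by
  have hr : 0 < 2 / μ := by positivity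
  have hid : Integrable (fun z : ℝ ↦ z) (gaussianReal 0 v) :=
    IsGaussian.hasGaussianLaw_id.integrable
  have htanh : Integrable (fun z ↦ tanh (z / μ) * z) (gaussianReal 0 v) :=
    hid.bdd_mul (c := 1) (continuous_tanh.comp (continuous_id.div_const μ)).aestronglyMeasurable
      (ae_of_all _ fun z ↦ (Real.abs_tanh_lt_one _).le)
  have hexp : Integrable (fun z : ℝ ↦ |z| * rexp (-(2 / μ * |z|))) (gaussianReal 0 v) := by
    refine hid.abs.mul_bdd (c := 1) (by fun_prop) (ae_of_all _ fun z ↦ ?_)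
    rw [Real.norm_eq_abs, Real.abs_exp, Real.exp_le_one_iff, neg_nonpos]
    positivity
  have hshortfall : ∫ z, |z| * rexp (-(2 / μ * |z|)) ∂(gaussianReal 0 v)
      ≤ (√(2 * π * v))⁻¹ * (2 / (2 / μ) ^ 2) := by
    rw [← integral_abs_mul_exp_neg_mul_abs hr]
    exact integral_gaussianReal_le_inv_sqrt_mul_integral 0 hv (fun z ↦ by positivity)
      (integrable_abs_mul_exp_neg_mul_abs hr)
  calc √(2 * v / π) - μ ^ 2 / √(2 * π * v)
      = √(2 * v / π) - 2 * ((√(2 * π * v))⁻¹ * (2 / (2 / μ) ^ 2)) := by field_simp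
    _ ≤ √(2 * v / π) - 2 * ∫ z, |z| * rexp (-(2 / μ * |z|)) ∂(gaussianReal 0 v) := by gcongr
    _ = ∫ z, (|z| - 2 * (|z| * rexp (-(2 / μ * |z|)))) ∂(gaussianReal 0 v) := by
      rw [integral_sub hid.abs (hexp.const_mul 2), integral_const_mul, integral_abs_gaussianReal v]
    _ ≤ ∫ z, tanh (z / μ) * z ∂(gaussianReal 0 v) :=
      integral_mono (hid.abs.sub (hexp.const_mul 2)) htanh
        (abs_sub_two_mul_abs_mul_exp_le_tanh_div_mul hμ)

lemma div_mul_sqrt_sub_div_sqrt {t : ℝ} (ht : 0 < t) (a μ : ℝ) :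
    a / t * (√(2 * t / π) - μ ^ 2 / √(2 * π * t))
      = √(2 / π) * (a / √t) - a * μ ^ 2 / (√(2 * π) * t ^ ((3 : ℝ) / 2)) := by
  have hpow : t ^ ((3 : ℝ) / 2) = t * √t := by
    rw [Real.sqrt_eq_rpow, ← Real.rpow_one_add' ht.le (by norm_num)]
    norm_num
  have hsqrt : √t ^ 2 = t := Real.sq_sqrt ht.le
  rw [hpow, Real.sqrt_mul (by positivity) t, mul_div_right_comm, Real.sqrt_mul (by positivity) t]
  field_simp
  rw [hsqrt]
  field_simp

lemma le_integral_tanh_add_div_mul_of_hasLaw_gaussianReal {Ω : Type*} {mΩ : MeasurableSpace Ω}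
    {P : Measure Ω} {X Y : Ω → ℝ} {a b : ℝ≥0} (hX : HasLaw X (gaussianReal 0 a) P)
    (hY : HasLaw Y (gaussianReal 0 b) P) (hXY : IndepFun X Y P) (hab : a + b ≠ 0)
    {μ : ℝ} (hμ : 0 < μ) :
    √(2 / π) * (a / √(a + b)) - a * μ ^ 2 / (√(2 * π) * (a + b) ^ ((3 : ℝ) / 2))
      ≤ ∫ ω, tanh ((X ω + Y ω) / μ) * X ω ∂P := by
  have hab_pos : (0 : ℝ) < a + b := by exact_mod_cast pos_iff_ne_zero.2 hab
  have htanh : MemLp (fun z ↦ tanh (z / μ)) 2 (gaussianReal 0 (a + b)) :=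
    .of_bound (continuous_tanh.comp (continuous_id.div_const μ)).aestronglyMeasurable 1
      (ae_of_all _ fun z ↦ (Real.abs_tanh_lt_one _).le)
  have hreg := integral_comp_add_mul_of_hasLaw_gaussianReal hX hY hXY htanh
  calc √(2 / π) * (a / √(a + b)) - a * μ ^ 2 / (√(2 * π) * (a + b) ^ ((3 : ℝ) / 2))
      = a / (a + b) * (√(2 * (a + b) / π) - μ ^ 2 / √(2 * π * (a + b))) :=
        (div_mul_sqrt_sub_div_sqrt hab_pos a μ).symm
    _ ≤ a / (a + b) * ∫ z, tanh (z / μ) * z ∂(gaussianReal 0 (a + b)) := by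
      gcongr
      exact_mod_cast le_integral_tanh_div_mul_gaussianReal hab hμ
    _ = ∫ ω, tanh ((X ω + Y ω) / μ) * X ω ∂P := by
      rw [div_mul_eq_mul_div, ← hreg, mul_div_cancel_left₀ _ hab_pos.ne']

/-- Lemma: Gaussian expectation lower bound for `tanh((X+Y)/μ) X`. -/
theorem statement18 (σX σY μ : ℝ) (hX : 0 < σX) (hY : 0 < σY) (hμ : 0 < μ) :
    Real.sqrt (2 / π) * (σX ^ 2 / Real.sqrt (σX ^ 2 + σY ^ 2)) -
      2 * σX ^ 2 * μ ^ 2 / (Real.sqrt (2 * π) * (σX ^ 2 + σY ^ 2) ^ ((3 : ℝ) / 2)) -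
      3 * σX ^ 2 * μ ^ 4 / (2 * Real.sqrt (2 * π) * (σX ^ 2 + σY ^ 2) ^ ((5 : ℝ) / 2)) ≤
    ∫ v : ℝ × ℝ, Real.tanh ((v.1 + v.2) / μ) * v.1
      ∂((gaussianReal 0 ⟨σX ^ 2, sq_nonneg σX⟩).prod
          (gaussianReal 0 ⟨σY ^ 2, sq_nonneg σY⟩)) := by
  set a : ℝ≥0 := ⟨σX ^ 2, sq_nonneg σX⟩
  set b : ℝ≥0 := ⟨σY ^ 2, sq_nonneg σY⟩
  have hab : a + b ≠ 0 := NNReal.coe_ne_zero.1 (add_pos (pow_pos hX 2) (pow_pos hY 2)).ne'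
  have hsharp := le_integral_tanh_add_div_mul_of_hasLaw_gaussianReal
    (measurePreserving_fst (μ := gaussianReal 0 a) (ν := gaussianReal 0 b)).hasLaw
    measurePreserving_snd.hasLaw (indepFun_prod measurable_id measurable_id) hab hμ
  have hsecond : σX ^ 2 * μ ^ 2 / (√(2 * π) * (σX ^ 2 + σY ^ 2) ^ ((3 : ℝ) / 2))
      ≤ 2 * σX ^ 2 * μ ^ 2 / (√(2 * π) * (σX ^ 2 + σY ^ 2) ^ ((3 : ℝ) / 2)) := by
    gcongr
    linarith [sq_nonneg σX]
  have hthird : 0 ≤ 3 * σX ^ 2 * μ ^ 4 /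
      (2 * √(2 * π) * (σX ^ 2 + σY ^ 2) ^ ((5 : ℝ) / 2)) := by positivity
  exact (sub_le_self _ hthird).trans ((sub_le_sub_left hsecond _).trans hsharp)

end
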